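/- For every B ∈ 𝔅, the number l(B) of sets C ∈ 𝔅 with C ∩ B ≠ ∅ satisfies l(B) ≤ (4ν)^{2r−1}·(r+1). Consequently L = max{l(B) : B ∈ 𝔅} is well defined and L ≤ (4ν)^{2r−1}·(r+1). -/

import Mathlib

/-!
A set `C ∈ 𝔅` through a point `x` lies in the vertex set `V` of a 1-connected graph with at most
`r` edges. Starting from the trivial walk at `x` and repeatedly inserting a detour `a → b → a` to a
new vertex `b`, one obtains a closed lattice walk from `x` through all of `V`; its length is
`2 (|V| - 1) ≤ 2 r` because each detour uses a fresh edge of the graph (`exists_tour`). Padding it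
to length exactly `2 r` and dropping the last step, which only returns to `x`, leaves `2 r - 1`
steps. Each step is one of `2 ν` lattice directions, and a further bit records whether the point
it reaches belongs to `C`. Hence `C` is determined by a word of length `2 r - 1` over an alphabet
with `4 ν` letters (`exists_code`), so at most `(4 ν)^(2 r - 1)` members of `𝔅` contain `x`.
The same construction shows `|B| ≤ |V| ≤ r + 1`, and a union bound over the points of `B` gives
the result.
-/

open scoped BigOperators

/-- Points of the lattice ℤ^ν. -/
abbrev Pt (ν : ℕ) := Fin ν → ℤ

/-- The ℓ¹ distance on ℤ^ν: ‖s − t‖ = Σᵢ |sᵢ − tᵢ|. -/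
def latDist {ν : ℕ} (s t : Pt ν) : ℕ := ∑ i, (s i - t i).natAbs

/-- A graph `(V, E)` with vertices in ℤ^ν is 1-connected if every edge joins two
vertices of `V` at distance 1 and the graph is connected. -/
def IsOneConnected {ν : ℕ} (V : Finset (Pt ν)) (E : Finset (Sym2 (Pt ν))) : Prop :=
  (∀ e ∈ E, ∀ x ∈ e, x ∈ V) ∧
  (∀ x y : Pt ν, s(x, y) ∈ E → latDist x y = 1) ∧
  (∀ x ∈ V, ∀ y ∈ V, Relation.ReflTransGen (fun a b => s(a, b) ∈ E) x y)

/-- The size `S(B)` of a finite set `B ⊆ ℤ^ν`: the minimal number of edges of a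
1-connected graph `(V, E)` with `B ⊆ V`. -/
noncomputable def lsize {ν : ℕ} (B : Finset (Pt ν)) : ℕ :=
  sInf {m | ∃ V E, IsOneConnected V E ∧ B ⊆ V ∧ E.card = m}

/-- The collection 𝔅 of finite subsets of ℤ^ν with 1 ≤ S(B) ≤ r. -/
def Bfam (ν r : ℕ) : Set (Finset (Pt ν)) := {B | 1 ≤ lsize B ∧ lsize B ≤ r}

/-- `l(B)`: the number of sets `C ∈ 𝔅` with `C ∩ B ≠ ∅`. -/
noncomputable def lB {ν : ℕ} (r : ℕ) (B : Finset (Pt ν)) : ℕ :=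
  {C | C ∈ Bfam ν r ∧ (C ∩ B).Nonempty}.ncard

/-- The constant `L = max { l(B) : B ∈ 𝔅 }`. -/
noncomputable def Lconst (ν r : ℕ) : ℕ := sSup {n | ∃ B ∈ Bfam ν r, lB r B = n}

/-- The lattice neighbour of `x` in direction `i`, forwards or backwards according to the bit. -/
def latStep {ν : ℕ} (x : Pt ν) (i : Fin ν) (s : Bool) : Pt ν :=
  x + Pi.single i (if s then 1 else -1)

lemma latDist_comm' {ν : ℕ} (a b : Pt ν) : latDist a b = latDist b a := by
  unfold latDist
  refine Finset.sum_congr rfl fun i _ => ?_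
  omega

lemma latDist_latStep {ν : ℕ} (x : Pt ν) (i : Fin ν) (s : Bool) :
    latDist x (latStep x i s) = 1 := by
  unfold latDist latStep
  rw [Finset.sum_eq_single i]
  · cases s <;> simp
  · intro j _ hj
    simp [hj]
  · simp

lemma exists_latStep {ν : ℕ} {a b : Pt ν} (h : latDist a b = 1) :
    ∃ i s, b = latStep a i s := by
  unfold latDist at h
  obtain ⟨i, hi⟩ : ∃ i, (a i - b i).natAbs ≠ 0 := by
    by_contra! hc
    simp [hc] at h
  rw [← Finset.add_sum_erase _ _ (Finset.mem_univ i)] at h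
  have h0 : ∑ j ∈ Finset.univ.erase i, (a j - b j).natAbs = 0 := by omega
  have h1 : (a i - b i).natAbs = 1 := by omega
  rw [Finset.sum_eq_zero_iff] at h0
  have hj : ∀ j, j ≠ i → b j = a j := by
    intro j hj
    have := h0 j (by simp [hj])
    omega
  rcases Int.natAbs_eq (a i - b i) with h2 | h2
  · refine ⟨i, false, funext fun j => ?_⟩
    rcases eq_or_ne j i with rfl | hji
    · simp [latStep]; omega
    · simp [latStep, hji, hj j hji]
  · refine ⟨i, true, funext fun j => ?_⟩
    rcases eq_or_ne j i with rfl | hji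
    · simp [latStep]; omega
    · simp [latStep, hji, hj j hji]

lemma exists_crossing_edge {ν : ℕ} {V : Finset (Pt ν)} {E : Finset (Sym2 (Pt ν))}
    (h : IsOneConnected V E) {A : Finset (Pt ν)} {x y : Pt ν} (hx : x ∈ V) (hxA : x ∈ A)
    (hy : y ∈ V) (hyA : y ∉ A) : ∃ a ∈ A, ∃ b ∈ V, b ∉ A ∧ s(a, b) ∈ E := by
  by_contra! hc
  have key : ∀ z, Relation.ReflTransGen (fun a b => s(a, b) ∈ E) x z → z ∈ A := by
    intro z hz
    induction hz with
    | refl => exact hxA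
    | tail _ hbc ih =>
      by_contra hcA
      exact hc _ ih _ (h.1 _ hbc _ (Sym2.mem_mk_right _ _)) hcA hbc
  exact hyA (key y (h.2.2 x hx y hy))

/-- A closed lattice walk based at `x`, given as the list of its successive points. -/
def IsTour {ν : ℕ} (x : Pt ν) (w : List (Pt ν)) : Prop :=
  w.head? = some x ∧ w.getLast? = some x ∧ w.IsChain (fun a b => latDist a b = 1)

lemma IsTour.detour {ν : ℕ} {x a b : Pt ν} {p q : List (Pt ν)} (h : IsTour x (p ++ a :: q))
    (hab : latDist a b = 1) : IsTour x (p ++ a :: b :: a :: q) := by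
  obtain ⟨h1, h2, h3⟩ := h
  refine ⟨?_, ?_, ?_⟩
  · cases p <;> simpa using h1
  · simpa [List.getLast?_append, List.getLast?_cons_cons] using h2
  · rw [List.isChain_split] at h3 ⊢
    refine ⟨h3.1, ?_⟩
    rw [List.isChain_cons_cons, List.isChain_cons_cons]
    exact ⟨hab, latDist_comm' a b ▸ hab, h3.2⟩

/-- Growing a tour one vertex at a time. The edge set `F` witnesses that a tour visiting `k + 1`
vertices has consumed `k` distinct edges of the graph. -/
lemma exists_partial_tour {ν : ℕ} {V : Finset (Pt ν)} {E : Finset (Sym2 (Pt ν))}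
    (h : IsOneConnected V E) {x : Pt ν} (hx : x ∈ V) (k : ℕ) (hk : k + 1 ≤ V.card) :
    ∃ (w : List (Pt ν)) (F : Finset (Sym2 (Pt ν))), IsTour x w ∧ w.length = 2 * k + 1 ∧
      w.toFinset ⊆ V ∧ w.toFinset.card = k + 1 ∧ F ⊆ E ∧ F.card = k ∧
      ∀ e ∈ F, ∀ v ∈ e, v ∈ w := by
  induction k with
  | zero =>
    refine ⟨[x], ∅, ⟨rfl, rfl, by simp⟩, rfl, by simpa using hx, by simp, by simp, rfl, by simp⟩
  | succ k ih =>
    obtain ⟨w, F, hw, hlen, hV, hcard, hFE, hF, hFw⟩ := ih (by omega)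
    obtain ⟨y, hy, hyw⟩ := Finset.exists_mem_notMem_of_card_lt_card
      (show w.toFinset.card < V.card by omega)
    have hxw : x ∈ w.toFinset := by
      simpa using List.mem_of_mem_head? hw.1
    obtain ⟨a, ha, b, hb, hbw, hab⟩ := exists_crossing_edge h hx hxw hy hyw
    rw [List.mem_toFinset] at ha hbw
    obtain ⟨p, q, rfl⟩ := List.append_of_mem ha
    have hset : (p ++ a :: b :: a :: q).toFinset = insert b (p ++ a :: q).toFinset := by
      ext v; simp
    refine ⟨p ++ a :: b :: a :: q, insert s(a, b) F, hw.detour (h.2.1 _ _ hab), ?_, ?_, ?_, ?_,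
      ?_, ?_⟩
    · simp at hlen ⊢; omega
    · rw [hset]; exact Finset.insert_subset hb hV
    · rw [hset, Finset.card_insert_of_notMem (List.mem_toFinset.not.2 hbw), hcard]
    · exact Finset.insert_subset hab hFE
    · rw [Finset.card_insert_of_notMem, hF]
      exact fun hc => hbw (hFw _ hc _ (Sym2.mem_mk_right _ _))
    · intro e he v hv
      rcases Finset.mem_insert.1 he with rfl | he
      · rcases Sym2.mem_iff.1 hv with rfl | rfl <;> simp
      · have := hFw e he v hv
        simp at this ⊢; tauto

lemma exists_tour {ν : ℕ} {V : Finset (Pt ν)} {E : Finset (Sym2 (Pt ν))}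
    (h : IsOneConnected V E) {x : Pt ν} (hx : x ∈ V) :
    V.card ≤ E.card + 1 ∧
    ∃ (w : List (Pt ν)), IsTour x w ∧ w.length = 2 * (V.card - 1) + 1 ∧ ∀ v ∈ V, v ∈ w := by
  have hpos : 0 < V.card := Finset.card_pos.2 ⟨x, hx⟩
  obtain ⟨w, F, hw, hlen, hV, hcard, hFE, hF, -⟩ :=
    exists_partial_tour h hx (V.card - 1) (by omega)
  have hle := Finset.card_le_card hFE
  have heq := Finset.eq_of_subset_of_card_le hV (by omega)
  refine ⟨by omega, w, hw, hlen, fun v hv => ?_⟩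
  rw [← heq] at hv
  simpa using hv

lemma IsTour.pad {ν : ℕ} (hν : 1 ≤ ν) {x : Pt ν} {w : List (Pt ν)} (h : IsTour x w) (n : ℕ) :
    ∃ w', IsTour x w' ∧ w'.length = w.length + 2 * n ∧ ∀ v ∈ w, v ∈ w' := by
  induction n with
  | zero => exact ⟨w, h, rfl, fun _ => id⟩
  | succ n ih =>
    obtain ⟨w', hw', hlen, hmem⟩ := ih
    obtain ⟨q, rfl⟩ : ∃ q, w' = x :: q := by
      have := hw'.1
      cases w' with
      | nil => simp at this
      | cons a q => simp at this; exact ⟨q, by rw [this]⟩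
    refine ⟨x :: latStep x ⟨0, hν⟩ true :: x :: q,
      IsTour.detour (p := []) hw' (latDist_latStep _ _ _), ?_, ?_⟩
    · simp at hlen ⊢; omega
    · intro v hv
      have := hmem v hv
      simp at this ⊢; tauto

/-- The set of marked points on the walk from `x` described by a word of letters
(direction, sign, mark); the starting point itself is not included. -/
def decode {ν : ℕ} : List (Fin ν × Bool × Bool) → Pt ν → Finset (Pt ν)
  | [], _ => ∅
  | (i, s, m) :: l, x => (if m then {latStep x i s} else ∅) ∪ decode l (latStep x i s)

lemma exists_decode_eq {ν : ℕ} (C : Finset (Pt ν)) (l : List (Pt ν)) (x : Pt ν)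
    (h : (x :: l).IsChain (fun a b => latDist a b = 1)) :
    ∃ c : List (Fin ν × Bool × Bool), c.length = l.length ∧ decode c x = C ∩ l.toFinset := by
  induction l generalizing x with
  | nil => exact ⟨[], rfl, by simp [decode]⟩
  | cons y l ih =>
    rw [List.isChain_cons_cons] at h
    obtain ⟨c, hc, hd⟩ := ih y h.2
    obtain ⟨i, s, rfl⟩ := exists_latStep h.1
    refine ⟨(i, s, decide (latStep x i s ∈ C)) :: c, by simp [hc], ?_⟩
    ext v
    by_cases hC : latStep x i s ∈ C
    · simp [decode, hd, hC]
    · simp [decode, hd, hC]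

lemma exists_graph_of_mem_Bfam {ν r : ℕ} {C : Finset (Pt ν)} (hC : C ∈ Bfam ν r) :
    ∃ V E, IsOneConnected V E ∧ C ⊆ V ∧ E.card ≤ r := by
  obtain ⟨h1, h2⟩ := hC
  -- `sInf ∅ = 0`, so a positive size means that a spanning graph exists.
  have hne : {m | ∃ V E, IsOneConnected V E ∧ C ⊆ V ∧ E.card = m}.Nonempty :=
    Nat.nonempty_of_pos_sInf h1
  obtain ⟨V, E, hVE, hCV, hE⟩ := Nat.sInf_mem hne
  exact ⟨V, E, hVE, hCV, hE.trans_le h2⟩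

lemma card_le_of_mem_Bfam {ν r : ℕ} {B : Finset (Pt ν)} (hB : B ∈ Bfam ν r) :
    B.card ≤ r + 1 := by
  obtain ⟨V, E, hVE, hBV, hE⟩ := exists_graph_of_mem_Bfam hB
  rcases B.eq_empty_or_nonempty with rfl | ⟨x, hx⟩
  · simp
  · have h1 := (exists_tour hVE (hBV hx)).1
    have h2 := Finset.card_le_card hBV
    omega

lemma exists_code {ν r : ℕ} (hν : 1 ≤ ν) (hr : 1 ≤ r) {C : Finset (Pt ν)} (hC : C ∈ Bfam ν r)
    {x : Pt ν} (hx : x ∈ C) :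
    ∃ c : List (Fin ν × Bool × Bool), c.length = 2 * r - 1 ∧ insert x (decode c x) = C := by
  obtain ⟨V, E, hVE, hCV, hE⟩ := exists_graph_of_mem_Bfam hC
  obtain ⟨hVc, w₀, hw₀, hlen₀, hmem₀⟩ := exists_tour hVE (hCV hx)
  obtain ⟨w, hw, hlen, hmem⟩ := hw₀.pad hν (r - (V.card - 1))
  -- Split off the base point at both ends: `w = x :: (l ++ [x])`.
  obtain ⟨l, rfl⟩ : ∃ l, w = x :: (l ++ [x]) := by
    obtain ⟨h1, h2, -⟩ := hw
    cases w with
    | nil => simp at h1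
    | cons a q =>
      simp at h1
      subst h1
      have hq : q ≠ [] := by
        rintro rfl
        simp at hlen; omega
      refine ⟨q.dropLast, ?_⟩
      have h3 : q.getLast hq = a := by
        rw [List.getLast?_cons, List.getLast?_eq_some_getLast hq] at h2
        simpa using h2
      conv_lhs => rw [← List.dropLast_append_getLast hq, h3]
  have hchain : (x :: l).IsChain (fun a b => latDist a b = 1) := by
    have := hw.2.2
    rw [← List.cons_append] at this
    exact this.left_of_append
  obtain ⟨c, hc, hd⟩ := exists_decode_eq C l x hchain
  refine ⟨c, ?_, ?_⟩
  · simp at hlen; omega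
  · rw [hd]
    ext v
    constructor
    · intro hv
      rcases Finset.mem_insert.1 hv with rfl | hv
      · exact hx
      · exact (Finset.mem_inter.1 hv).1
    · intro hv
      have := hmem v (hmem₀ v (hCV hv))
      simp at this ⊢; tauto

lemma lB_bound {ν r : ℕ} (hν : 1 ≤ ν) (hr : 1 ≤ r) {B : Finset (Pt ν)} (hB : B ∈ Bfam ν r) :
    {C | C ∈ Bfam ν r ∧ (C ∩ B).Nonempty}.Finite ∧
      lB r B ≤ (4 * ν) ^ (2 * r - 1) * (r + 1) := by
  classical
  let T : Finset (Finset (Pt ν)) := B.biUnion fun x =>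
    (Finset.univ : Finset (List.Vector (Fin ν × Bool × Bool) (2 * r - 1))).image
      fun c => insert x (decode c.1 x)
  have hsub : {C | C ∈ Bfam ν r ∧ (C ∩ B).Nonempty} ⊆ (T : Set (Finset (Pt ν))) := by
    rintro C ⟨hC, x, hx⟩
    obtain ⟨hxC, hxB⟩ := Finset.mem_inter.1 hx
    obtain ⟨c, hc, hcC⟩ := exists_code hν hr hC hxC
    exact Finset.mem_coe.2 (Finset.mem_biUnion.2
      ⟨x, hxB, Finset.mem_image.2 ⟨⟨c, hc⟩, Finset.mem_univ _, hcC⟩⟩)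
  have hT : T.card ≤ B.card * (4 * ν) ^ (2 * r - 1) := by
    refine Finset.card_biUnion_le_card_mul _ _ _ fun x _ => Finset.card_image_le.trans ?_
    rw [Finset.card_univ, card_vector]
    simp only [Fintype.card_prod, Fintype.card_fin, Fintype.card_bool]
    exact le_of_eq (by ring)
  refine ⟨T.finite_toSet.subset hsub, ?_⟩
  calc lB r B ≤ (T : Set (Finset (Pt ν))).ncard := Set.ncard_le_ncard hsub T.finite_toSet
    _ = T.card := Set.ncard_coe_finset T
    _ ≤ B.card * (4 * ν) ^ (2 * r - 1) := hT
    _ ≤ (r + 1) * (4 * ν) ^ (2 * r - 1) := Nat.mul_le_mul_right _ (card_le_of_mem_Bfam hB)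
    _ = _ := mul_comm _ _

/-- For every `B ∈ 𝔅` the number `l(B)` of sets `C ∈ 𝔅` with
`C ∩ B ≠ ∅` satisfies `l(B) ≤ (4ν)^{2r−1}(r+1)`. Consequently
`L = max { l(B) : B ∈ 𝔅 }` is well defined and `L ≤ (4ν)^{2r−1}(r+1)`. -/
theorem lB_le_and_Lconst_le {ν r : ℕ} (hν : 1 ≤ ν) (hr : 1 ≤ r) :
    (∀ B ∈ Bfam ν r,
      {C | C ∈ Bfam ν r ∧ (C ∩ B).Nonempty}.Finite ∧
      lB r B ≤ (4 * ν) ^ (2 * r - 1) * (r + 1)) ∧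
    BddAbove {n | ∃ B ∈ Bfam ν r, lB r B = n} ∧
    Lconst ν r ≤ (4 * ν) ^ (2 * r - 1) * (r + 1) := by
  have hub : ∀ n ∈ {n | ∃ B ∈ Bfam ν r, lB r B = n}, n ≤ (4 * ν) ^ (2 * r - 1) * (r + 1) := by
    rintro n ⟨B, hB, rfl⟩
    exact (lB_bound hν hr hB).2
  exact ⟨fun B hB => lB_bound hν hr hB, ⟨_, hub⟩, csSup_le' hub⟩
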